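/- Assume R is positive definite, Q − SᵀR⁻¹S is positive definite, and Q + Q̄ − SᵀR⁻¹S is positive definite. Let T > 0 and let P : [0,T] → (symmetric n×n real matrices) be a continuously differentiable solution of the Riccati equation P′(t) + P(t)A + AᵀP(t) + CᵀP(t)C + Q − (BᵀP(t) + DᵀP(t)C + S)ᵀ(R + DᵀP(t)D)⁻¹(BᵀP(t) + DᵀP(t)C + S) = 0, P(T) = 0, with P(t) positive semi-definite for all t. Then the terminal value problem Π′(t) + Π(t)(A + Ā) + (A + Ā)ᵀΠ(t) + (C + C̄)ᵀP(t)(C + C̄) + Q + Q̄ − (BᵀΠ(t) + DᵀP(t)(C + C̄) + S)ᵀ(R + DᵀP(t)D)⁻¹(BᵀΠ(t) + DᵀP(t)(C + C̄) + S) = 0 for t ∈ [0,T], with Π(T) = 0, admits a unique continuously differentiable solution Π : [0,T] → (symmetric n×n real matrices) with Π(t) positive semi-definite for all t ∈ [0,T]. -/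

import Mathlib

open Matrix

/-- Entrywise derivative (within a set) of a matrix-valued function of time. -/
noncomputable def matDerivWithin {n : ℕ} (P : ℝ → Matrix (Fin n) (Fin n) ℝ)
    (s : Set ℝ) (t : ℝ) : Matrix (Fin n) (Fin n) ℝ :=
  Matrix.of fun i j => derivWithin (fun τ => P τ i j) s t

/-- `P` is a continuously differentiable, symmetric, positive semi-definite solution on
`[0, T]` of the Riccati terminal value problem
`P' + PA + AᵀP + CᵀPC + Q - (BᵀP + DᵀPC + S)ᵀ(R + DᵀPD)⁻¹(BᵀP + DᵀPC + S) = 0`,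
`P(T) = 0`. -/
def IsRiccatiPSol {n m : ℕ} (A C : Matrix (Fin n) (Fin n) ℝ)
    (B D : Matrix (Fin n) (Fin m) ℝ) (Q : Matrix (Fin n) (Fin n) ℝ)
    (S : Matrix (Fin m) (Fin n) ℝ) (R : Matrix (Fin m) (Fin m) ℝ)
    (T : ℝ) (P : ℝ → Matrix (Fin n) (Fin n) ℝ) : Prop :=
  (∀ i j, ContDiffOn ℝ 1 (fun t => P t i j) (Set.Icc 0 T)) ∧
  (∀ t ∈ Set.Icc (0:ℝ) T, (P t).IsSymm) ∧
  (∀ t ∈ Set.Icc (0:ℝ) T, (P t).PosSemidef) ∧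
  (∀ t ∈ Set.Icc (0:ℝ) T,
    matDerivWithin P (Set.Icc 0 T) t + P t * A + Aᵀ * P t + Cᵀ * P t * C + Q
      - (Bᵀ * P t + Dᵀ * P t * C + S)ᵀ * (R + Dᵀ * P t * D)⁻¹
          * (Bᵀ * P t + Dᵀ * P t * C + S) = 0) ∧
  P T = 0

/-- `Π` is a continuously differentiable, symmetric, positive semi-definite solution on
`[0, T]` of the mean field Riccati terminal value problem associated with a given `P`. -/
def IsRiccatiPiSol {n m : ℕ} (A Abar C Cbar : Matrix (Fin n) (Fin n) ℝ)
    (B D : Matrix (Fin n) (Fin m) ℝ) (Q Qbar : Matrix (Fin n) (Fin n) ℝ)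
    (S : Matrix (Fin m) (Fin n) ℝ) (R : Matrix (Fin m) (Fin m) ℝ)
    (T : ℝ) (P Pi0 : ℝ → Matrix (Fin n) (Fin n) ℝ) : Prop :=
  (∀ i j, ContDiffOn ℝ 1 (fun t => Pi0 t i j) (Set.Icc 0 T)) ∧
  (∀ t ∈ Set.Icc (0:ℝ) T, (Pi0 t).IsSymm) ∧
  (∀ t ∈ Set.Icc (0:ℝ) T, (Pi0 t).PosSemidef) ∧
  (∀ t ∈ Set.Icc (0:ℝ) T,
    matDerivWithin Pi0 (Set.Icc 0 T) t + Pi0 t * (A + Abar) + (A + Abar)ᵀ * Pi0 t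
      + (C + Cbar)ᵀ * P t * (C + Cbar) + Q + Qbar
      - (Bᵀ * Pi0 t + Dᵀ * P t * (C + Cbar) + S)ᵀ * (R + Dᵀ * P t * D)⁻¹
          * (Bᵀ * Pi0 t + Dᵀ * P t * (C + Cbar) + S) = 0) ∧
  Pi0 T = 0

section RiccatiAux
open Set
open scoped Matrix.Norms.Operator

theorem ric_gronwall_right {E : Type*} [NormedAddCommGroup E] [NormedSpace ℝ E]
    {f f' : ℝ → E} {a b K : ℝ}
    (hf : ∀ t ∈ Icc a b, HasDerivWithinAt f (f' t) (Icc a b) t) (hK : ∀ t ∈ Icc a b, ‖f' t‖ ≤ K * ‖f t‖)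
    (ha : f a = 0) : ∀ t ∈ Icc a b, f t = 0 := by
  apply eq_zero_of_abs_deriv_le_mul_abs_self_of_eq_zero_right (f' := f') (K := K)
    (HasDerivWithinAt.continuousOn hf) _ ha (fun x hx => hK x (Ico_subset_Icc_self hx))
  intro x hx
  exact (hf x (Ico_subset_Icc_self hx)).mono_of_mem_nhdsWithin (Icc_mem_nhdsGE_of_mem hx)

theorem ric_reverse {E : Type*} [NormedAddCommGroup E] [NormedSpace ℝ E]
    {f f' : ℝ → E} {b : ℝ}
    (hf : ∀ t ∈ Icc 0 b, HasDerivWithinAt f (f' t) (Icc 0 b) t) :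
    ∀ t ∈ Icc 0 b, HasDerivWithinAt (fun s => f (b - s)) (-f' (b - t)) (Icc 0 b) t := by
  intro t ht
  have hm : MapsTo (fun s => b - s) (Icc 0 b) (Icc 0 b) := by
    intro s hs; exact ⟨by linarith [hs.2], by linarith [hs.1]⟩
  have h1 : HasDerivWithinAt (fun s : ℝ => b - s) (-1) (Icc 0 b) t := by
    simpa using (hasDerivWithinAt_id t (Icc 0 b)).const_sub b
  have := (hf (b - t) (hm ht)).scomp t h1 hm
  simpa [Function.comp_def] using this

theorem ric_gronwall_left {E : Type*} [NormedAddCommGroup E] [NormedSpace ℝ E]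
    {f f' : ℝ → E} {b K : ℝ}
    (hf : ∀ t ∈ Icc 0 b, HasDerivWithinAt f (f' t) (Icc 0 b) t) (hK : ∀ t ∈ Icc 0 b, ‖f' t‖ ≤ K * ‖f t‖)
    (hb : f b = 0) : ∀ t ∈ Icc 0 b, f t = 0 := by
  intro t ht
  have hm : MapsTo (fun s => b - s) (Icc 0 b) (Icc 0 b) := by
    intro s hs; exact ⟨by linarith [hs.2], by linarith [hs.1]⟩
  have := ric_gronwall_right (ric_reverse hf) (K := K)
    (fun t ht => by simpa using hK _ (hm ht)) (by simpa using hb) (b - t) (hm ht)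
  simpa using this

theorem ric_bound {E : Type*} [SeminormedAddCommGroup E] {f : ℝ → E} {a b : ℝ}
    (hf : ContinuousOn f (Icc a b)) : ∃ K : NNReal, ∀ t ∈ Icc a b, ‖f t‖ ≤ K := by
  obtain ⟨C, hC⟩ := isCompact_Icc.exists_bound_of_continuousOn hf
  exact ⟨C.toNNReal, fun t ht => (hC t ht).trans (Real.le_coe_toNNReal C)⟩

theorem ric_linear {ι : Type*} [Fintype ι] [DecidableEq ι] (M : ℝ → Matrix ι ι ℝ) {T : ℝ}
    (hT : 0 ≤ T) (hM : ContinuousOn M (Icc 0 T)) (z0 : ι → ℝ) :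
    ∃ z : ℝ → ι → ℝ, z 0 = z0 ∧ ∀ t ∈ Icc 0 T, HasDerivWithinAt z (M t *ᵥ z t) (Icc 0 T) t := by
  obtain ⟨L, hL⟩ := ric_bound hM
  set r : NNReal := ‖z0‖₊ * (Real.exp (L * T)).toNNReal with hr
  have hr' : (r : ℝ) = ‖z0‖ * Real.exp (L * T) := by
    simp [hr, (Real.exp_pos _).le]
  let c : ℝ → ℝ := fun x => max (-r : ℝ) (min r x)
  have hc1 : LipschitzWith 1 c := (LipschitzWith.id.const_min _).const_max _
  have hcr : ∀ x, ‖c x‖ ≤ r := by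
    intro x
    rw [Real.norm_eq_abs, abs_le]
    have := r.2
    exact ⟨le_max_left _ _, max_le (by simp) (min_le_left _ _)⟩
  have hcx : ∀ x, ‖c x‖ ≤ ‖x‖ := by
    intro x
    have := hc1.dist_le_mul x 0
    have h0 : c 0 = 0 := by simp [c]
    simpa [h0] using this
  have hcid : ∀ x, ‖x‖ ≤ r → c x = x := by
    intro x hx
    rw [Real.norm_eq_abs, abs_le] at hx
    simp [c, hx.1, hx.2]
  let cl : (ι → ℝ) → (ι → ℝ) := fun z i => c (z i)
  have hcl : LipschitzWith 1 cl := by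
    apply LipschitzWith.of_dist_le_mul
    intro x y
    rw [NNReal.coe_one, one_mul]
    refine (dist_pi_le_iff dist_nonneg).2 fun i => ?_
    have := hc1.dist_le_mul (x i) (y i)
    rw [NNReal.coe_one, one_mul] at this
    exact this.trans (dist_le_pi_dist x y i)
  have hclr : ∀ z, ‖cl z‖ ≤ r := fun z => (pi_norm_le_iff_of_nonneg r.2).2 fun i => hcr _
  have hclx : ∀ z, ‖cl z‖ ≤ ‖z‖ := fun z =>
    (pi_norm_le_iff_of_nonneg (norm_nonneg _)).2 fun i => (hcx _).trans (norm_le_pi_norm z i)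
  have hclid : ∀ z, ‖z‖ ≤ r → cl z = z := fun z hz =>
    funext fun i => hcid _ ((norm_le_pi_norm z i).trans hz)
  have hPL : IsPicardLindelof (fun t z => M t *ᵥ cl z) (⟨0, left_mem_Icc.2 hT⟩ : Icc 0 T) z0
      (L * r * T.toNNReal) 0 (L * r) L := by
    constructor
    · intro t ht
      apply LipschitzWith.lipschitzOnWith
      apply LipschitzWith.of_dist_le_mul
      intro x y
      rw [dist_eq_norm, ← Matrix.mulVec_sub]
      refine (linfty_opNorm_mulVec _ _).trans ?_
      refine mul_le_mul (hL t ht) ?_ (norm_nonneg _) L.2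
      simpa [dist_eq_norm] using hcl.dist_le_mul x y
    · intro x _
      fun_prop
    · intro t ht x _
      refine (linfty_opNorm_mulVec _ _).trans ?_
      push_cast
      exact mul_le_mul (hL t ht) (hclr x) (norm_nonneg _) L.2
    · simp [hT]
  obtain ⟨z, hz0, hz⟩ := hPL.exists_eq_forall_mem_Icc_hasDerivWithinAt₀
  refine ⟨z, hz0, fun t ht => ?_⟩
  have hg := norm_le_gronwallBound_of_norm_deriv_right_le (f := z) (f' := fun t => M t *ᵥ cl (z t))
    (δ := ‖z0‖) (K := L) (ε := 0) (a := 0) (b := T)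
    (HasDerivWithinAt.continuousOn hz)
    (fun x hx => (hz x (Ico_subset_Icc_self hx)).mono_of_mem_nhdsWithin (Icc_mem_nhdsGE_of_mem hx))
    (by rw [← hz0])
    (fun x hx => by
      rw [add_zero]
      refine (linfty_opNorm_mulVec _ _).trans ?_
      exact mul_le_mul (hL x (Ico_subset_Icc_self hx)) (hclx _) (norm_nonneg _) L.2) t ht
  rw [gronwallBound_ε0] at hg
  have : ‖z t‖ ≤ r := by
    rw [hr']
    refine hg.trans ?_
    gcongr
    · linarith [ht.2]
  have h2 := hz t ht
  simp only [hclid _ this] at h2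
  exact h2

theorem ric_entry {n : ℕ} {X : ℝ → Matrix (Fin n) (Fin n) ℝ} {X' : Matrix (Fin n) (Fin n) ℝ}
    {s : Set ℝ} {t : ℝ} :
    HasDerivWithinAt X X' s t ↔ ∀ i j, HasDerivWithinAt (fun τ => X τ i j) (X' i j) s t := by
  have h : HasDerivWithinAt X X' s t ↔
      HasDerivWithinAt (fun τ i j => X τ i j : ℝ → Fin n → Fin n → ℝ) (fun i j => X' i j) s t := by
    exact hasDerivWithinAt_iff_tendsto_slope.trans
      (Iff.trans Iff.rfl hasDerivWithinAt_iff_tendsto_slope.symm)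
  rw [h, hasDerivWithinAt_pi]
  exact forall_congr' fun i => hasDerivWithinAt_pi

theorem ric_transpose {n : ℕ} {X : ℝ → Matrix (Fin n) (Fin n) ℝ} {X' : Matrix (Fin n) (Fin n) ℝ}
    {s : Set ℝ} {t : ℝ} (h : HasDerivWithinAt X X' s t) :
    HasDerivWithinAt (fun τ => (X τ)ᵀ) X'ᵀ s t := by
  rw [ric_entry] at h ⊢
  exact fun i j => h j i

theorem ric_linmap {n : ℕ} {E : Type*} [NormedAddCommGroup E] [NormedSpace ℝ E]
    (L : Matrix (Fin n) (Fin n) ℝ →ₗ[ℝ] E)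
    {X : ℝ → Matrix (Fin n) (Fin n) ℝ} {X' : Matrix (Fin n) (Fin n) ℝ}
    {s : Set ℝ} {t : ℝ} (h : HasDerivWithinAt X X' s t) :
    HasDerivWithinAt (fun τ => L (X τ)) (L X') s t := by
  have := (LinearMap.toContinuousLinearMap L).hasFDerivAt (x := X t)
  exact this.comp_hasDerivWithinAt t h

theorem ric_mulVec {n : ℕ} (x : Fin n → ℝ)
    {X : ℝ → Matrix (Fin n) (Fin n) ℝ} {X' : Matrix (Fin n) (Fin n) ℝ}
    {s : Set ℝ} {t : ℝ} (h : HasDerivWithinAt X X' s t) :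
    HasDerivWithinAt (fun τ => X τ *ᵥ x) (X' *ᵥ x) s t :=
  ric_linmap ((Matrix.mulVecBilin ℝ ℝ).flip x) h

theorem ric_quad {n : ℕ} (x : Fin n → ℝ)
    {X : ℝ → Matrix (Fin n) (Fin n) ℝ} {X' : Matrix (Fin n) (Fin n) ℝ}
    {s : Set ℝ} {t : ℝ} (h : HasDerivWithinAt X X' s t) :
    HasDerivWithinAt (fun τ => x ⬝ᵥ (X τ *ᵥ x)) (x ⬝ᵥ (X' *ᵥ x)) s t :=
  ric_linmap ((dotProductBilin ℝ ℝ x) ∘ₗ ((Matrix.mulVecBilin ℝ ℝ).flip x)) h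

theorem ric_inv {n : ℕ} 
    {X : ℝ → Matrix (Fin n) (Fin n) ℝ} {X' : Matrix (Fin n) (Fin n) ℝ}
    {s : Set ℝ} {t : ℝ} (h : HasDerivWithinAt X X' s t) (hu : IsUnit (X t)) :
    HasDerivWithinAt (fun τ => (X τ)⁻¹) (-((X t)⁻¹ * X' * (X t)⁻¹)) s t := by
  obtain ⟨u, hu⟩ := hu
  have h1 := hasFDerivAt_ringInverse (𝕜 := ℝ) u
  rw [hu] at h1
  have h2 := h1.comp_hasDerivWithinAt t h
  have h3 : ((u⁻¹ : (Matrix (Fin n) (Fin n) ℝ)ˣ) : Matrix (Fin n) (Fin n) ℝ) = (X t)⁻¹ := by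
    rw [← hu, Matrix.coe_units_inv]
  simp only [h3] at h2
  simp only [Matrix.nonsing_inv_eq_ringInverse] at h2 ⊢
  exact h2

theorem ric_system {n : ℕ} {T : ℝ} (hT : 0 ≤ T) (F N G : ℝ → Matrix (Fin n) (Fin n) ℝ)
    (hF : ContinuousOn F (Icc 0 T)) (hN : ContinuousOn N (Icc 0 T))
    (hG : ContinuousOn G (Icc 0 T)) :
    ∃ U V : ℝ → Matrix (Fin n) (Fin n) ℝ, U 0 = 1 ∧ V 0 = 0 ∧ ∀ t ∈ Icc 0 T,
      HasDerivWithinAt U (-(F t) * U t + N t * V t) (Icc 0 T) t ∧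
      HasDerivWithinAt V (G t * U t + (F t)ᵀ * V t) (Icc 0 T) t := by
  have hM : ContinuousOn (fun t => fromBlocks (-(F t)) (N t) (G t) (F t)ᵀ) (Icc 0 T) := by
    apply continuousOn_pi.2
    intro i
    apply continuousOn_pi.2
    intro j
    rcases i with i | i <;> rcases j with j | j <;>
      simp only [fromBlocks_apply₁₁, fromBlocks_apply₁₂, fromBlocks_apply₂₁, fromBlocks_apply₂₂,
        Matrix.neg_apply, Matrix.transpose_apply] <;> fun_prop
  choose z hz0 hz using fun j : Fin n => ric_linear _ hT hM (Sum.elim (Pi.single j 1) 0)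
  refine ⟨fun t => Matrix.of fun i j => z j t (Sum.inl i),
    fun t => Matrix.of fun i j => z j t (Sum.inr i), ?_, ?_, fun t ht => ⟨?_, ?_⟩⟩
  · ext i j
    simp [hz0, Matrix.one_apply, Pi.single_apply]
  · ext i j
    simp [hz0]
  · rw [ric_entry]
    intro i j
    have := (hasDerivWithinAt_pi.1 (hz j t ht)) (Sum.inl i)
    refine HasDerivWithinAt.congr_deriv this ?_
    simp [Matrix.mul_apply, Matrix.mulVec, dotProduct]
  · rw [ric_entry]
    intro i j
    have := (hasDerivWithinAt_pi.1 (hz j t ht)) (Sum.inr i)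
    refine HasDerivWithinAt.congr_deriv this ?_
    simp [Matrix.mul_apply, Matrix.mulVec, dotProduct]

theorem ric_core {n : ℕ} {T : ℝ} (hT : 0 ≤ T) (F N G : ℝ → Matrix (Fin n) (Fin n) ℝ)
    (hF : ContinuousOn F (Icc 0 T)) (hN : ContinuousOn N (Icc 0 T))
    (hG : ContinuousOn G (Icc 0 T))
    (hNp : ∀ t ∈ Icc 0 T, (N t).PosSemidef) (hGp : ∀ t ∈ Icc 0 T, (G t).PosSemidef) :
    ∃ X : ℝ → Matrix (Fin n) (Fin n) ℝ, X 0 = 0 ∧ ∀ t ∈ Icc 0 T,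
      HasDerivWithinAt X (X t * F t + (F t)ᵀ * X t + G t - X t * N t * X t) (Icc 0 T) t ∧
      (X t).PosSemidef := by
  obtain ⟨U, V, hU0, hV0, hUV⟩ := ric_system hT F N G hF hN hG
  have hNs : ∀ t ∈ Icc 0 T, (N t)ᵀ = N t := fun t ht => by
    simpa [IsHermitian] using (hNp t ht).isHermitian
  have hGs : ∀ t ∈ Icc 0 T, (G t)ᵀ = G t := fun t ht => by
    simpa [IsHermitian] using (hGp t ht).isHermitian
  let W : ℝ → Matrix (Fin n) (Fin n) ℝ := fun t => (U t)ᵀ * V t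
  have hW : ∀ t ∈ Icc 0 T, HasDerivWithinAt W
      ((V t)ᵀ * N t * V t + (U t)ᵀ * G t * U t) (Icc 0 T) t := by
    intro t ht
    have := (ric_transpose (hUV t ht).1).mul (hUV t ht).2
    refine HasDerivWithinAt.congr_deriv this ?_
    simp only [Matrix.transpose_add, Matrix.transpose_mul, Matrix.transpose_neg, hNs t ht]
    noncomm_ring
  have hWs : ∀ t ∈ Icc 0 T, (W t)ᵀ = W t := by
    intro t ht
    have h0 := ric_gronwall_right (f := fun t => (W t)ᵀ - W t) (f' := fun _ => 0) (K := 0)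
      (a := 0) (b := T) (fun t ht => by
        have := (ric_transpose (hW t ht)).sub (hW t ht)
        refine HasDerivWithinAt.congr_deriv this ?_
        simp only [Matrix.transpose_add, Matrix.transpose_mul, hNs t ht, hGs t ht,
          Matrix.transpose_transpose]
        noncomm_ring) (by simp) (by simp [W, hV0]) t ht
    exact sub_eq_zero.1 h0
  have hquad : ∀ t (x : Fin n → ℝ), x ⬝ᵥ (((V t)ᵀ * N t * V t + (U t)ᵀ * G t * U t) *ᵥ x)
      = (V t *ᵥ x) ⬝ᵥ (N t *ᵥ (V t *ᵥ x)) + (U t *ᵥ x) ⬝ᵥ (G t *ᵥ (U t *ᵥ x)) := by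
    intro t x
    simp only [Matrix.add_mulVec, dotProduct_add, ← Matrix.mulVec_mulVec]
    simp only [Matrix.dotProduct_mulVec x, Matrix.vecMul_transpose]
  have hN0 : ∀ t ∈ Icc 0 T, ∀ x, 0 ≤ x ⬝ᵥ (N t *ᵥ x) := fun t ht x => by
    simpa using (hNp t ht).dotProduct_mulVec_nonneg x
  have hG0 : ∀ t ∈ Icc 0 T, ∀ x, 0 ≤ x ⬝ᵥ (G t *ᵥ x) := fun t ht x => by
    simpa using (hGp t ht).dotProduct_mulVec_nonneg x
  have hmono : ∀ x, MonotoneOn (fun t => x ⬝ᵥ (W t *ᵥ x)) (Icc 0 T) := by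
    intro x
    apply monotoneOn_of_deriv_nonneg (convex_Icc _ _)
    · exact HasDerivWithinAt.continuousOn fun t ht => ric_quad x (hW t ht)
    · intro t ht
      exact ((ric_quad x (hW t (interior_subset ht))).mono interior_subset).differentiableWithinAt
    · intro t ht
      have ht' := interior_subset ht
      have := (ric_quad x (hW t ht')).hasDerivAt (mem_interior_iff_mem_nhds.1 ht)
      rw [this.deriv, hquad]
      exact add_nonneg (hN0 t ht' _) (hG0 t ht' _)
  have hq0 : ∀ x, x ⬝ᵥ (W 0 *ᵥ x) = 0 := by simp [W, hV0]
  have h0T : (0:ℝ) ∈ Icc 0 T := left_mem_Icc.2 hT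
  have hWp : ∀ t ∈ Icc 0 T, (W t).PosSemidef := by
    intro t ht
    refine PosSemidef.of_dotProduct_mulVec_nonneg ?_ ?_
    · simpa [IsHermitian] using hWs t ht
    · intro x
      have := hmono x h0T ht ht.1
      simp only [hq0] at this
      simpa using this
  have hUinv : ∀ t ∈ Icc 0 T, IsUnit (U t) := by
    intro s hs
    rw [← Matrix.mulVec_injective_iff_isUnit]
    refine (injective_iff_map_eq_zero (Matrix.mulVecLin (U s))).2 ?_
    intro x hx
    simp only [Matrix.mulVecLin_apply] at hx
    rcases hs.1.eq_or_lt with h | hspos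
    · subst h; simpa [hU0] using hx
    have hsub : Icc 0 s ⊆ Icc 0 T := Icc_subset_Icc_right hs.2
    have hqs : x ⬝ᵥ (W s *ᵥ x) = 0 := by
      simp only [W, ← Matrix.mulVec_mulVec]
      rw [Matrix.dotProduct_mulVec, Matrix.vecMul_transpose, hx, zero_dotProduct]
    have hq : ∀ t ∈ Icc 0 s, x ⬝ᵥ (W t *ᵥ x) = 0 := by
      intro t ht
      have h1 := hmono x h0T (hsub ht) ht.1
      have h2 := hmono x (hsub ht) hs ht.2
      simp only [hq0, hqs] at h1 h2
      exact le_antisymm h2 h1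
    have hNV : ∀ t ∈ Icc 0 s, N t *ᵥ (V t *ᵥ x) = 0 := by
      intro t ht
      have h1 := (ric_quad x (hW t (hsub ht))).mono hsub
      have h2 : HasDerivWithinAt (fun t => x ⬝ᵥ (W t *ᵥ x)) 0 (Icc 0 s) t :=
        (hasDerivWithinAt_const t (Icc 0 s) (0:ℝ)).congr hq (hq t ht)
      have h3 := (uniqueDiffOn_Icc hspos t ht).eq_deriv _ h1 h2
      rw [hquad] at h3
      have h4 := hN0 t (hsub ht) (V t *ᵥ x)
      have h5 := hG0 t (hsub ht) (U t *ᵥ x)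
      have h6 : (V t *ᵥ x) ⬝ᵥ (N t *ᵥ (V t *ᵥ x)) = 0 := by linarith
      have := (hNp t (hsub ht)).dotProduct_mulVec_zero_iff (V t *ᵥ x)
      rw [star_trivial] at this
      exact this.1 h6
    obtain ⟨K, hK⟩ := ric_bound hF
    have := ric_gronwall_left (f := fun t => U t *ᵥ x) (f' := fun t => - (F t *ᵥ (U t *ᵥ x)))
      (b := s) (K := K) (fun t ht => by
        have := (ric_mulVec x (hUV t (hsub ht)).1).mono hsub
        refine HasDerivWithinAt.congr_deriv this ?_
        rw [Matrix.add_mulVec, ← Matrix.mulVec_mulVec, ← Matrix.mulVec_mulVec, hNV t ht,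
          Matrix.neg_mulVec, add_zero]) (fun t ht => by
        rw [norm_neg]
        refine (linfty_opNorm_mulVec _ _).trans ?_
        exact mul_le_mul_of_nonneg_right (hK t (hsub ht)) (norm_nonneg _)) hx 0
        (left_mem_Icc.2 hspos.le)
    simpa [hU0] using this
  refine ⟨fun t => V t * (U t)⁻¹, by simp [hV0], fun t ht => ⟨?_, ?_⟩⟩
  · have h1 := (hUV t ht).2.mul (ric_inv (hUV t ht).1 (hUinv t ht))
    refine HasDerivWithinAt.congr_deriv h1 ?_
    have hd : U t * (U t)⁻¹ = 1 :=
      Matrix.mul_nonsing_inv _ ((Matrix.isUnit_iff_isUnit_det _).1 (hUinv t ht))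
    have hd' : (U t)⁻¹ * U t = 1 :=
      Matrix.nonsing_inv_mul _ ((Matrix.isUnit_iff_isUnit_det _).1 (hUinv t ht))
    have e1 : V t * -((U t)⁻¹ * (-F t * U t + N t * V t) * (U t)⁻¹)
        = V t * (U t)⁻¹ * F t * (U t * (U t)⁻¹) - V t * (U t)⁻¹ * N t * (V t * (U t)⁻¹) := by
      noncomm_ring
    have e2 : (G t * U t + (F t)ᵀ * V t) * (U t)⁻¹
        = G t * (U t * (U t)⁻¹) + (F t)ᵀ * (V t * (U t)⁻¹) := by
      noncomm_ring
    rw [e1, e2, hd, Matrix.mul_one, Matrix.mul_one]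
    abel
  · have hd : U t * (U t)⁻¹ = 1 :=
      Matrix.mul_nonsing_inv _ ((Matrix.isUnit_iff_isUnit_det _).1 (hUinv t ht))
    have := (hWp t ht).conjTranspose_mul_mul_same ((U t)⁻¹)
    convert this using 1
    simp only [W, Matrix.conjTranspose_eq_transpose_of_trivial]
    have h2 : ((U t)⁻¹)ᵀ * (U t)ᵀ = 1 := by
      rw [← Matrix.transpose_mul, hd, Matrix.transpose_one]
    rw [← Matrix.mul_assoc, h2, Matrix.one_mul]

theorem ric_algebra {n m : ℕ} (At X Qt : Matrix (Fin n) (Fin n) ℝ)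
    (B : Matrix (Fin n) (Fin m) ℝ)
    (L : Matrix (Fin m) (Fin n) ℝ) (Ki : Matrix (Fin m) (Fin m) ℝ)
    (hX : Xᵀ = X) (hK : Kiᵀ = Ki) :
    X * At + Atᵀ * X + Qt - (Bᵀ * X + L)ᵀ * Ki * (Bᵀ * X + L)
      = X * (At - B * Ki * L) + (At - B * Ki * L)ᵀ * X + (Qt - Lᵀ * Ki * L)
        - X * (B * Ki * Bᵀ) * X := by
  simp only [Matrix.transpose_add, Matrix.transpose_sub, Matrix.transpose_mul, hX, hK,
    Matrix.transpose_transpose, Matrix.mul_add, Matrix.add_mul, Matrix.mul_sub, Matrix.sub_mul,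
    Matrix.mul_assoc]
  abel

theorem ric_G_posSemidef {n m : ℕ} (Ct P Qt : Matrix (Fin n) (Fin n) ℝ)
    (D : Matrix (Fin n) (Fin m) ℝ) (S : Matrix (Fin m) (Fin n) ℝ) (R : Matrix (Fin m) (Fin m) ℝ)
    (hR : R.PosDef) (hQ : (Qt - Sᵀ * R⁻¹ * S).PosSemidef) (hP : P.PosSemidef)
    (hK : (R + Dᵀ * P * D).PosDef) :
    (Ctᵀ * P * Ct + Qt - (Dᵀ * P * Ct + S)ᵀ * (R + Dᵀ * P * D)⁻¹
      * (Dᵀ * P * Ct + S)).PosSemidef := by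
  have hPs : Pᵀ = P := by simpa [IsHermitian] using hP.isHermitian
  let _ := hR.isUnit.invertible
  let _ := hK.isUnit.invertible
  have h1 : (fromBlocks Qt Sᵀ (Sᵀ)ᴴ R).PosSemidef := by
    rw [PosDef.fromBlocks₂₂ _ _ hR]
    simpa using hQ
  have h2 := hP.conjTranspose_mul_mul_same (fromCols Ct D)
  have h3 : (fromCols Ct D)ᴴ * P * fromCols Ct D
      = fromBlocks (Ctᵀ * P * Ct) (Ctᵀ * P * D) (Dᵀ * P * Ct) (Dᵀ * P * D) := by
    rw [Matrix.conjTranspose_eq_transpose_of_trivial, transpose_fromCols, fromRows_mul,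
      fromRows_mul_fromCols]
  rw [h3] at h2
  have h4 := h2.add h1
  rw [fromBlocks_add] at h4
  have h5 : fromBlocks (Ctᵀ * P * Ct + Qt) (Ctᵀ * P * D + Sᵀ) (Dᵀ * P * Ct + (Sᵀ)ᴴ) (Dᵀ * P * D + R)
      = fromBlocks (Ctᵀ * P * Ct + Qt) ((Dᵀ * P * Ct + S)ᵀ) ((Dᵀ * P * Ct + S)ᵀ)ᴴ
        (R + Dᵀ * P * D) := by
    simp [Matrix.transpose_mul, hPs, Matrix.mul_assoc, add_comm]
  rw [h5, PosDef.fromBlocks₂₂ _ _ hK] at h4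
  simpa using h4

theorem ric_matDeriv {n : ℕ} {T : ℝ} {X : ℝ → Matrix (Fin n) (Fin n) ℝ}
    (hX : ∀ i j, ContDiffOn ℝ 1 (fun t => X t i j) (Icc 0 T)) :
    ∀ t ∈ Icc 0 T, HasDerivWithinAt X (matDerivWithin X (Icc 0 T) t) (Icc 0 T) t := by
  intro t ht
  rw [ric_entry]
  intro i j
  exact (((hX i j).differentiableOn one_ne_zero) t ht).hasDerivWithinAt

theorem ric_matDeriv_eq {n : ℕ} {T : ℝ} (hT : 0 < T) {X : ℝ → Matrix (Fin n) (Fin n) ℝ}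
    {X' : Matrix (Fin n) (Fin n) ℝ} {t : ℝ} (ht : t ∈ Icc 0 T)
    (h : HasDerivWithinAt X X' (Icc 0 T) t) : matDerivWithin X (Icc 0 T) t = X' := by
  rw [ric_entry] at h
  ext i j
  exact (h i j).derivWithin (uniqueDiffOn_Icc hT t ht)

theorem ric_contDiff {n : ℕ} {T : ℝ} (hT : 0 < T) {X X' : ℝ → Matrix (Fin n) (Fin n) ℝ}
    (h : ∀ t ∈ Icc 0 T, HasDerivWithinAt X (X' t) (Icc 0 T) t) (hc : ContinuousOn X' (Icc 0 T)) :
    ∀ i j, ContDiffOn ℝ 1 (fun t => X t i j) (Icc 0 T) := by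
  intro i j
  rw [contDiffOn_one_iff_derivWithin (uniqueDiffOn_Icc hT)]
  refine ⟨fun t ht => (ric_entry.1 (h t ht) i j).differentiableWithinAt, ?_⟩
  have : ContinuousOn (fun t => X' t i j) (Icc 0 T) := by fun_prop
  exact this.congr fun t ht => (ric_entry.1 (h t ht) i j).derivWithin (uniqueDiffOn_Icc hT t ht)

/-- Existence and uniqueness for the backward Riccati equation in standard form. -/
theorem ric_backward_exists {n : ℕ} {T : ℝ} (hT : 0 < T) (F N G : ℝ → Matrix (Fin n) (Fin n) ℝ)
    (hF : ContinuousOn F (Icc 0 T)) (hN : ContinuousOn N (Icc 0 T))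
    (hG : ContinuousOn G (Icc 0 T))
    (hNp : ∀ t ∈ Icc 0 T, (N t).PosSemidef) (hGp : ∀ t ∈ Icc 0 T, (G t).PosSemidef) :
    ∃ X : ℝ → Matrix (Fin n) (Fin n) ℝ, X T = 0 ∧
      (∀ i j, ContDiffOn ℝ 1 (fun t => X t i j) (Icc 0 T)) ∧ ∀ t ∈ Icc 0 T,
      matDerivWithin X (Icc 0 T) t
        + (X t * F t + (F t)ᵀ * X t + G t - X t * N t * X t) = 0 ∧
      (X t).PosSemidef := by
  have hm : MapsTo (fun s => T - s) (Icc 0 T) (Icc 0 T) := by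
    intro s hs; exact ⟨by linarith [hs.2], by linarith [hs.1]⟩
  have hr : ContinuousOn (fun s : ℝ => T - s) (Icc 0 T) := by fun_prop
  obtain ⟨X, hX0, hX⟩ := ric_core hT.le (fun t => F (T - t)) (fun t => N (T - t))
    (fun t => G (T - t)) (hF.comp hr hm) (hN.comp hr hm) (hG.comp hr hm)
    (fun t ht => hNp _ (hm ht)) (fun t ht => hGp _ (hm ht))
  have hd := ric_reverse (fun t ht => (hX t ht).1)
  simp only [sub_sub_cancel] at hd
  have hc : ContinuousOn (fun t => X (T - t)) (Icc 0 T) := HasDerivWithinAt.continuousOn hd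
  refine ⟨fun t => X (T - t), by simpa using hX0, ric_contDiff hT hd ?_, fun t ht => ⟨?_, ?_⟩⟩
  · generalize hY : (fun t => X (T - t)) = Y at hc
    have hY' : ∀ t, X (T - t) = Y t := fun t => congrFun hY t
    simp only [hY']
    fun_prop
  · rw [ric_matDeriv_eq hT ht (hd t ht)]
    abel
  · exact (hX _ (hm ht)).2

theorem ric_backward_unique {n : ℕ} {T : ℝ} (F N G : ℝ → Matrix (Fin n) (Fin n) ℝ)
    (hF : ContinuousOn F (Icc 0 T)) (hN : ContinuousOn N (Icc 0 T))
    (X Y : ℝ → Matrix (Fin n) (Fin n) ℝ) (hXT : X T = 0) (hYT : Y T = 0)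
    (hXc : ∀ i j, ContDiffOn ℝ 1 (fun t => X t i j) (Icc 0 T))
    (hYc : ∀ i j, ContDiffOn ℝ 1 (fun t => Y t i j) (Icc 0 T))
    (hX : ∀ t ∈ Icc 0 T, matDerivWithin X (Icc 0 T) t
        + (X t * F t + (F t)ᵀ * X t + G t - X t * N t * X t) = 0)
    (hY : ∀ t ∈ Icc 0 T, matDerivWithin Y (Icc 0 T) t
        + (Y t * F t + (F t)ᵀ * Y t + G t - Y t * N t * Y t) = 0) :
    ∀ t ∈ Icc 0 T, X t = Y t := by
  have hXd := ric_matDeriv hXc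
  have hYd := ric_matDeriv hYc
  have hXcont : ContinuousOn X (Icc 0 T) := HasDerivWithinAt.continuousOn hXd
  have hYcont : ContinuousOn Y (Icc 0 T) := HasDerivWithinAt.continuousOn hYd
  obtain ⟨K1, hK1⟩ := ric_bound (f := fun t => F t - N t * X t) (a := 0) (b := T) (by fun_prop)
  obtain ⟨K2, hK2⟩ := ric_bound (f := fun t => (F t)ᵀ - Y t * N t) (a := 0) (b := T) (by fun_prop)
  intro t ht
  have := ric_gronwall_left (f := fun t => X t - Y t)
    (f' := fun t => -((X t - Y t) * (F t - N t * X t) + ((F t)ᵀ - Y t * N t) * (X t - Y t)))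
    (b := T) (K := K1 + K2) (fun t ht => by
      refine HasDerivWithinAt.congr_deriv ((hXd t ht).sub (hYd t ht)) ?_
      rw [eq_neg_of_add_eq_zero_left (hX t ht), eq_neg_of_add_eq_zero_left (hY t ht)]
      noncomm_ring) (fun t ht => by
      rw [norm_neg]
      refine (norm_add_le _ _).trans ?_
      have h1 := (norm_mul_le (X t - Y t) (F t - N t * X t)).trans
        (mul_le_mul_of_nonneg_left (hK1 t ht) (norm_nonneg _))
      have h2 := (norm_mul_le ((F t)ᵀ - Y t * N t) (X t - Y t)).trans
        (mul_le_mul_of_nonneg_right (hK2 t ht) (norm_nonneg _))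
      linarith) (by simp [hXT, hYT]) t ht
  exact sub_eq_zero.1 this

end RiccatiAux

/-- if `R > 0`, `Q - SᵀR⁻¹S > 0` and `Q + Q̄ - SᵀR⁻¹S > 0`, and if `P` is
a C¹ symmetric positive semi-definite solution of the `P`-Riccati equation on `[0, T]`,
then the mean field Riccati terminal value problem for `Π` admits a unique C¹ symmetric
positive semi-definite solution on `[0, T]`. -/
theorem riccati_Pi_solvability {n m : ℕ} (hn : 0 < n) (hm : 0 < m)
    (A Abar C Cbar : Matrix (Fin n) (Fin n) ℝ) (B D : Matrix (Fin n) (Fin m) ℝ)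
    (Q Qbar : Matrix (Fin n) (Fin n) ℝ) (S : Matrix (Fin m) (Fin n) ℝ)
    (R : Matrix (Fin m) (Fin m) ℝ)
    (hQ : Q.IsSymm) (hQbar : Qbar.IsSymm) (hRpd : R.PosDef)
    (hQS : (Q - Sᵀ * R⁻¹ * S).PosDef) (hQQbS : (Q + Qbar - Sᵀ * R⁻¹ * S).PosDef)
    (T : ℝ) (hT : 0 < T)
    (P : ℝ → Matrix (Fin n) (Fin n) ℝ) (hP : IsRiccatiPSol A C B D Q S R T P) :
    (∃ Pi0 : ℝ → Matrix (Fin n) (Fin n) ℝ,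
        IsRiccatiPiSol A Abar C Cbar B D Q Qbar S R T P Pi0)
    ∧ ∀ Pi₁ Pi₂ : ℝ → Matrix (Fin n) (Fin n) ℝ,
        IsRiccatiPiSol A Abar C Cbar B D Q Qbar S R T P Pi₁ →
        IsRiccatiPiSol A Abar C Cbar B D Q Qbar S R T P Pi₂ →
        ∀ t ∈ Set.Icc (0:ℝ) T, Pi₁ t = Pi₂ t := by
  obtain ⟨hPc, hPs, hPp, -, -⟩ := hP
  have hPcont : ContinuousOn P (Set.Icc 0 T) := by
    apply continuousOn_pi.2
    intro i
    apply continuousOn_pi.2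
    intro j
    exact (hPc i j).continuousOn
  have hK : ∀ t ∈ Set.Icc (0:ℝ) T, (R + Dᵀ * P t * D).PosDef := by
    intro t ht
    have := (hPp t ht).conjTranspose_mul_mul_same D
    rw [Matrix.conjTranspose_eq_transpose_of_trivial] at this
    exact hRpd.add_posSemidef this
  have hKcont : ContinuousOn (fun t => (R + Dᵀ * P t * D)⁻¹) (Set.Icc 0 T) := by
    intro t ht
    have h1 : ContinuousAt Inv.inv (R + Dᵀ * P t * D) := by
      apply continuousAt_matrix_inv
      rw [Ring.inverse_eq_inv']
      exact continuousAt_inv₀ (hK t ht).det_pos.ne'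
    have h2 : ContinuousOn (fun t => R + Dᵀ * P t * D) (Set.Icc 0 T) := by fun_prop
    exact ContinuousAt.comp_continuousWithinAt (f := fun t => R + Dᵀ * P t * D) h1 (h2 t ht)
  have hKs : ∀ t ∈ Set.Icc (0:ℝ) T, ((R + Dᵀ * P t * D)⁻¹)ᵀ = (R + Dᵀ * P t * D)⁻¹ := by
    intro t ht
    simpa [IsHermitian] using (hK t ht).inv.isHermitian
  generalize hKi : (fun t => (R + Dᵀ * P t * D)⁻¹) = Ki at hKcont
  have hKi' : ∀ t, (R + Dᵀ * P t * D)⁻¹ = Ki t := fun t => congrFun hKi t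
  let F : ℝ → Matrix (Fin n) (Fin n) ℝ := fun t =>
    (A + Abar) - B * Ki t * (Dᵀ * P t * (C + Cbar) + S)
  let N : ℝ → Matrix (Fin n) (Fin n) ℝ := fun t => B * Ki t * Bᵀ
  let G : ℝ → Matrix (Fin n) (Fin n) ℝ := fun t =>
    ((C + Cbar)ᵀ * P t * (C + Cbar) + (Q + Qbar))
      - (Dᵀ * P t * (C + Cbar) + S)ᵀ * Ki t * (Dᵀ * P t * (C + Cbar) + S)
  have hF : ContinuousOn F (Set.Icc 0 T) := by fun_prop
  have hN : ContinuousOn N (Set.Icc 0 T) := by fun_prop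
  have hG : ContinuousOn G (Set.Icc 0 T) := by fun_prop
  have hNp : ∀ t ∈ Set.Icc (0:ℝ) T, (N t).PosSemidef := by
    intro t ht
    have := (hK t ht).inv.posSemidef.mul_mul_conjTranspose_same B
    rwa [Matrix.conjTranspose_eq_transpose_of_trivial, hKi'] at this
  have hGp : ∀ t ∈ Set.Icc (0:ℝ) T, (G t).PosSemidef := by
    intro t ht
    have := ric_G_posSemidef (C + Cbar) (P t) (Q + Qbar) D S R hRpd hQQbS.posSemidef (hPp t ht)
      (hK t ht)
    rwa [hKi'] at this
  have heq : ∀ X X' : Matrix (Fin n) (Fin n) ℝ, Xᵀ = X → ∀ t ∈ Set.Icc (0:ℝ) T,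
      X' + X * (A + Abar) + (A + Abar)ᵀ * X
        + (C + Cbar)ᵀ * P t * (C + Cbar) + Q + Qbar
        - (Bᵀ * X + Dᵀ * P t * (C + Cbar) + S)ᵀ * (R + Dᵀ * P t * D)⁻¹
          * (Bᵀ * X + Dᵀ * P t * (C + Cbar) + S)
      = X' + (X * F t + (F t)ᵀ * X + G t - X * N t * X) := by
    intro X X' hX t ht
    have hs := hKs t ht
    rw [hKi'] at hs
    have := ric_algebra (A + Abar) X ((C + Cbar)ᵀ * P t * (C + Cbar) + (Q + Qbar))
      B (Dᵀ * P t * (C + Cbar) + S) (Ki t) hX hs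
    rw [hKi']
    simp only [F, G, N]
    rw [← this, add_assoc (Bᵀ * X)]
    abel
  constructor
  · obtain ⟨X, hXT, hXc, hX⟩ := ric_backward_exists hT F N G hF hN hG hNp hGp
    have hXs : ∀ t ∈ Set.Icc (0:ℝ) T, (X t)ᵀ = X t := fun t ht => by
      simpa [IsHermitian] using (hX t ht).2.isHermitian
    refine ⟨X, hXc, hXs, fun t ht => (hX t ht).2, fun t ht => ?_, hXT⟩
    rw [heq _ _ (hXs t ht) t ht]
    exact (hX t ht).1
  · intro X Y hX hY
    obtain ⟨hXc, hXs, -, hX, hXT⟩ := hX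
    obtain ⟨hYc, hYs, -, hY, hYT⟩ := hY
    refine ric_backward_unique F N G hF hN X Y hXT hYT hXc hYc (fun t ht => ?_) (fun t ht => ?_)
    · rw [← heq _ _ (hXs t ht) t ht]
      exact hX t ht
    · rw [← heq _ _ (hYs t ht) t ht]
      exact hY t ht
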